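/- Let (c_k)_{k=0}^{m} be the spherical coordinate functions on S^m (c₀ = sin θ ∏_{j<m} sin φ_j, c₁ = cos θ ∏_{j<m} sin φ_j, c_k = cos φ_{k−1} ∏_{j=k}^{m−1} sin φ_j for 2 ≤ k ≤ m). Let f : Λ → ℝ^{2n+1} be a smooth embedding of a compact manifold with first coordinate x₁(p) > 0 for all p. Then the map F : Λ × S^m → ℝ^{2(n+m)+1} given by F(p, u) = (x₁(p)·c₀(u), y₁(p)·c₀(u), …, x₁(p)·c_m(u), y₁(p)·c_m(u), x₂(p), y₂(p), …, x_n(p), y_n(p), z(p)) is injective. -/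

import Mathlib

theorem eq_and_eq_of_pos_smul_eq_pos_smul {E : Type*} [NormedAddCommGroup E] [NormedSpace ℝ E]
    {a b : ℝ} {u v : E} (ha : 0 < a) (hb : 0 < b) (hu : ‖u‖ = 1) (hv : ‖v‖ = 1)
    (h : a • u = b • v) : a = b ∧ u = v := by
  have hab : a = b := by
    simpa [norm_smul, hu, hv, abs_of_pos ha, abs_of_pos hb] using congrArg norm h
  subst hab
  exact ⟨rfl, smul_right_injective E ha.ne' h⟩

/-- Embeddedness of the front `S^m`-spinning: given an embedding
`f = (x₁, y₁, …, x_n, y_n, z) : Λ → ℝ^{2n+1}` of a compact manifold with `x₁ > 0`, the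
spun map `F(p, u) = (x₁(p)c₀(u), y₁(p)c₀(u), …, x₁(p)c_m(u), y₁(p)c_m(u), x₂(p), …, z(p))`
on `Λ × S^m` is injective, where `c₀, …, c_m` are the coordinate functions of the unit
sphere `S^m ⊂ ℝ^{m+1}` (so that `∑ c_k² = 1`). -/
theorem spun_map_injective (n m : ℕ) (hn : 1 ≤ n) (hm : 1 ≤ m)
    (Λ : Type) [TopologicalSpace Λ] [CompactSpace Λ]
    (f : Λ → EuclideanSpace ℝ (Fin (2 * n + 1)))
    (hf : Topology.IsEmbedding f)
    (hx : ∀ p, 0 < f p ⟨0, by omega⟩)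
    (F : Λ × Metric.sphere (0 : EuclideanSpace ℝ (Fin (m + 1))) 1 →
      Fin (2 * (n + m) + 1) → ℝ)
    (hF : ∀ (p : Λ) (u : Metric.sphere (0 : EuclideanSpace ℝ (Fin (m + 1))) 1)
        (i : Fin (2 * (n + m) + 1)),
      F (p, u) i =
        if h : (i : ℕ) < 2 * (m + 1) then
          (if (i : ℕ) % 2 = 0 then
            f p ⟨0, by omega⟩ * u.1 ⟨(i : ℕ) / 2, by omega⟩
          else
            f p ⟨1, by omega⟩ * u.1 ⟨(i : ℕ) / 2, by omega⟩)
        else f p ⟨(i : ℕ) - 2 * m, by have := i.isLt; omega⟩) :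
    Function.Injective F := by
  rintro ⟨p, u⟩ ⟨q, v⟩ h
  have coord (i : Fin (2 * (n + m) + 1)) := (hF p u i).symm.trans ((congrFun h i).trans (hF q v i))
  have even_coord (k : Fin (m + 1)) :
      f p ⟨0, by omega⟩ * u.1 k = f q ⟨0, by omega⟩ * v.1 k := by
    have hk : 2 * (k : ℕ) < 2 * (m + 1) := by omega
    simpa [hk] using coord ⟨2 * k, by omega⟩
  have odd_coord (k : Fin (m + 1)) :
      f p ⟨1, by omega⟩ * u.1 k = f q ⟨1, by omega⟩ * v.1 k := by
    have hk : 2 * (k : ℕ) + 1 < 2 * (m + 1) := by omega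
    have hmod : (2 * (k : ℕ) + 1) % 2 = 1 := by omega
    have hdiv : (2 * (k : ℕ) + 1) / 2 = k := by omega
    simpa [hk, hmod, hdiv] using coord ⟨2 * k + 1, by omega⟩
  obtain ⟨hx₁, huv⟩ := eq_and_eq_of_pos_smul_eq_pos_smul (hx p) (hx q)
    (norm_eq_of_mem_sphere u) (norm_eq_of_mem_sphere v) (by ext k; simpa using even_coord k)
  obtain rfl : u = v := Subtype.ext huv
  obtain ⟨k, hk⟩ : ∃ k, u.1 k ≠ 0 := by
    by_contra! hzero
    exact ne_zero_of_mem_unit_sphere u (by ext k; simpa using hzero k)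
  have hy₁ := mul_right_cancel₀ hk (odd_coord k)
  suffices hpq : f p = f q by rw [hf.injective hpq]
  ext ⟨j, hj⟩
  match j with
  | 0 => exact hx₁
  | 1 => exact hy₁
  | j + 2 =>
    have hlt : ¬ j + 2 + 2 * m < 2 * (m + 1) := by omega
    simpa [hlt] using coord ⟨j + 2 + 2 * m, by omega⟩
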